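/- The intersection of the Markov spectrum M with the open interval (10√718341/2819, (14264157401+16294182√718341)/9321104530) consists of exactly one point, namely √145/4, which is therefore an isolated point of M. Moreover, both endpoints 10√718341/2819 and (14264157401+16294182√718341)/9321104530 belong to M. -/

import Mathlib

open Filter Set MeasureTheory
open scoped ENNReal

/-- Finite continued fraction `[a 0; a 1, ..., a n]`. -/
noncomputable def cfConv : (ℕ → ℝ) → ℕ → ℝ
  | a, 0 => a 0
  | a, n + 1 => a 0 + 1 / cfConv (fun i => a (i + 1)) n

/-- Value of the infinite continued fraction `[a 0; a 1, a 2, ...]`,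
as the limit of its convergents. -/
noncomputable def cfVal (a : ℕ → ℝ) : ℝ := limUnder atTop (cfConv a)

/-- `λ_k(α) = [α_k; α_{k+1}, ...] + [0; α_{k-1}, α_{k-2}, ...]`. -/
noncomputable def lambdaVal (α : ℤ → ℕ) (k : ℤ) : ℝ :=
  cfVal (fun n => (α (k + n) : ℝ)) +
  cfVal (fun n => if n = 0 then 0 else (α (k - n) : ℝ))

/-- The Markov value `m(α) = sup_{k ∈ ℤ} λ_k(α)`. -/
noncomputable def markovValue (α : ℤ → ℕ) : ℝ := ⨆ k : ℤ, lambdaVal α k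

/-- The Markov spectrum. -/
def markovSpectrum : Set ℝ :=
  { x | ∃ α : ℤ → ℕ, (∀ n, 0 < α n) ∧ BddAbove (range (lambdaVal α)) ∧
      markovValue α = x }

/-- The dimension function `d(t) = dim_H (M ∩ (-∞, t))`. -/
noncomputable def dimFun (t : ℝ) : ℝ≥0∞ := dimH (markovSpectrum ∩ Iio t)

/-!
A value below the right endpoint forces the digits `1` and `2`, and excludes every finite word
around which some `λ_k` is too large. If moreover the value exceeds the left endpoint, a finite
search around a position with large `λ_k` leaves two possibilities. Either `22 11111 22` occurs
there; then comparison with the extremal periodic sequence `lowerSeq`, which maximises the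
continued fractions beginning with `[2; 1, 1, 1, 1, 1, 2, 2]`, bounds `λ_k` by the left endpoint.
Or three blocks `22` separated by `111` occur somewhere. Such a chain must continue on each side by
`111 22` or `11111 22`. If it ends with `11111 22` on both sides, both tails are at most the
one-sided value of `lowerSeq`; since prepending digits to a continued fraction is a contraction, the
`λ` at the end of the chain with the smaller tail is then at least the right endpoint, which is
attained when both tails are extremal. If it ends on one side only, a finite search excludes it.
Hence the chain is infinite in both directions: the sequence is periodic with period `22 111` and
its value is `√145 / 4`.
-/

/-! ### Convergence -/

section Contraction

variable {K : Type*} [Field K] [LinearOrder K] [IsStrictOrderedRing K]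

theorem abs_one_div_sub_one_div_le {x y : K} (hx : 1 ≤ x) (hy : 1 ≤ y) :
    |1 / x - 1 / y| ≤ |x - y| := by
  have hxy : 1 ≤ x * y := one_le_mul_of_one_le_of_one_le hx hy
  rw [div_sub_div 1 1 (by positivity) (by positivity), one_mul, mul_one, abs_div, abs_sub_comm,
    abs_of_nonneg (by positivity : 0 ≤ x * y)]
  exact div_le_self (abs_nonneg _) hxy

theorem abs_one_div_add_one_div_sub_le {a x y : K} (ha : 1 ≤ a) (hx : 1 ≤ x) (hy : 1 ≤ y) :
    |1 / (a + 1 / x) - 1 / (a + 1 / y)| ≤ |x - y| / 4 := by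
  have hx' : 2 ≤ a * x + 1 := by nlinarith
  have hy' : 2 ≤ a * y + 1 := by nlinarith
  have hdiff : 1 / (a + 1 / x) - 1 / (a + 1 / y) = (x - y) / ((a * x + 1) * (a * y + 1)) := by
    field_simp
    ring
  rw [hdiff, abs_div, abs_of_nonneg (by positivity : 0 ≤ (a * x + 1) * (a * y + 1))]
  exact div_le_div_of_nonneg_left (abs_nonneg _) (by norm_num) (by nlinarith)

end Contraction

theorem one_le_cfConv (n : ℕ) {a : ℕ → ℝ} (h : ∀ i, 1 ≤ a i) : 1 ≤ cfConv a n := by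
  induction n generalizing a with
  | zero => exact h 0
  | succ n ih =>
    have htail : 1 ≤ cfConv (fun i => a (i + 1)) n := ih fun i => h (i + 1)
    exact le_add_of_le_of_nonneg (h 0) (by positivity)

theorem dist_cfConv_succ_le (n : ℕ) {a : ℕ → ℝ} (h : ∀ i, 1 ≤ a i) :
    dist (cfConv a n) (cfConv a (n + 1)) ≤ 2 * (1 / 2) ^ n := by
  have hzero {b : ℕ → ℝ} (hb : ∀ i, 1 ≤ b i) : |b 0 - cfConv b 1| ≤ 1 := by
    have hb1 : 0 < b 1 := zero_lt_one.trans_le (hb 1)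
    simp only [cfConv, sub_add_cancel_left, abs_neg, zero_add]
    rw [abs_of_pos (by positivity)]
    exact (div_le_one hb1).2 (hb 1)
  induction n using Nat.twoStepInduction generalizing a with
  | zero => simpa [Real.dist_eq, cfConv] using (hzero h).trans one_le_two
  | one =>
    have hstep := abs_one_div_sub_one_div_le (h 1) (one_le_cfConv 1 fun i => h (i + 1))
    simpa [Real.dist_eq, cfConv] using hstep.trans (hzero fun i => h (i + 1))
  | more n ih _ =>
    have htail (i : ℕ) : 1 ≤ a (i + 2) := h (i + 2)
    have hstep := abs_one_div_add_one_div_sub_le (h 1) (one_le_cfConv n htail)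
      (one_le_cfConv (n + 1) htail)
    have hn := ih htail
    simp only [Real.dist_eq, cfConv, add_sub_add_left_eq_sub, zero_add, add_assoc,
      Nat.reduceAdd] at hstep hn ⊢
    rw [pow_add]
    linarith

theorem tendsto_cfConv {a : ℕ → ℝ} (h : ∀ i, 1 ≤ a i) :
    Tendsto (cfConv a) atTop (nhds (cfVal a)) :=
  (cauchySeq_of_le_geometric (1 / 2) 2 (by norm_num)
    fun n => dist_cfConv_succ_le n h).tendsto_limUnder

theorem one_le_cfVal {a : ℕ → ℝ} (h : ∀ i, 1 ≤ a i) : 1 ≤ cfVal a :=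
  ge_of_tendsto' (tendsto_cfConv h) fun n => one_le_cfConv n h

theorem cfVal_eq {a : ℕ → ℝ} (h : ∀ i, 1 ≤ a (i + 1)) :
    cfVal a = a 0 + 1 / cfVal (fun i => a (i + 1)) := by
  have htail : cfVal (fun i => a (i + 1)) ≠ 0 := (zero_lt_one.trans_le (one_le_cfVal h)).ne'
  refine Tendsto.limUnder_eq ((tendsto_add_atTop_iff_nat 1).1 ?_)
  exact (tendsto_const_nhds.div (tendsto_cfConv h) htail).const_add (a 0)

/-! ### One-sided values of a bi-infinite sequence -/

/-- `[α_k; α_{k+1}, α_{k+2}, ...]`, the part of `λ_k(α)` read to the right. -/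
noncomputable def rightVal (α : ℤ → ℕ) (k : ℤ) : ℝ := cfVal fun n => (α (k + n) : ℝ)

/-- `[α_{k-1}; α_{k-2}, α_{k-3}, ...]`, the reciprocal of the part of `λ_k(α)` read to the left. -/
noncomputable def leftVal (α : ℤ → ℕ) (k : ℤ) : ℝ := cfVal fun n => (α (k - 1 - n) : ℝ)

/-- The sequence `α` read backwards; the letters at `k - 1, k - 2, ...` move to
`1 - k, 2 - k, ...`. -/
def revSeq (α : ℤ → ℕ) : ℤ → ℕ := fun n => α (-n)

section OneSided

variable {α β : ℤ → ℕ} {k l : ℤ}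

theorem revSeq_revSeq (α : ℤ → ℕ) : revSeq (revSeq α) = α := by
  funext n
  simp only [revSeq, neg_neg]

theorem revSeq_pos (h : ∀ n, 0 < α n) (n : ℤ) : 0 < revSeq α n := h (-n)

theorem leftVal_eq_rightVal_revSeq (α : ℤ → ℕ) (k : ℤ) :
    leftVal α k = rightVal (revSeq α) (1 - k) := by
  unfold leftVal rightVal revSeq
  congr! 4
  ring

theorem leftVal_revSeq (α : ℤ → ℕ) (k : ℤ) : leftVal (revSeq α) k = rightVal α (1 - k) := by
  rw [leftVal_eq_rightVal_revSeq, revSeq_revSeq]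

theorem rightVal_congr (h : ∀ n : ℕ, α (k + n) = β (l + n)) : rightVal α k = rightVal β l := by
  simp only [rightVal, h]

theorem lambdaVal_congr (h : ∀ n : ℤ, α (k + n) = β (l + n)) :
    lambdaVal α k = lambdaVal β l := by
  simp only [lambdaVal, sub_eq_add_neg, h]

theorem leftVal_eq_rightVal_of_symm {c : ℤ} (hc : ∀ n, α (c - n) = α n) (k : ℤ) :
    leftVal α k = rightVal α (c + 1 - k) := by
  rw [leftVal_eq_rightVal_revSeq]
  refine rightVal_congr fun n => ?_
  rw [revSeq, ← hc]
  congr 1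
  ring

theorem one_le_rightVal (h : ∀ n, 0 < α n) (k : ℤ) : 1 ≤ rightVal α k :=
  one_le_cfVal fun i => by exact_mod_cast h (k + i)

theorem rightVal_pos (h : ∀ n, 0 < α n) (k : ℤ) : 0 < rightVal α k :=
  zero_lt_one.trans_le (one_le_rightVal h k)

theorem leftVal_pos (h : ∀ n, 0 < α n) (k : ℤ) : 0 < leftVal α k := by
  rw [leftVal_eq_rightVal_revSeq]
  exact rightVal_pos (revSeq_pos h) _

theorem rightVal_eq (h : ∀ n, 0 < α n) (k : ℤ) :
    rightVal α k = α k + 1 / rightVal α (k + 1) := by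
  unfold rightVal
  rw [cfVal_eq fun i => by exact_mod_cast h _]
  simp only [Nat.cast_zero, add_zero, Nat.cast_add, Nat.cast_one, add_assoc, add_comm (1 : ℤ)]

theorem lt_rightVal (h : ∀ n, 0 < α n) (k : ℤ) : α k < rightVal α k := by
  rw [rightVal_eq h]
  exact lt_add_of_pos_right _ (one_div_pos.2 (rightVal_pos h _))

theorem one_lt_rightVal (h : ∀ n, 0 < α n) (k : ℤ) : 1 < rightVal α k :=
  lt_of_le_of_lt (by exact_mod_cast h k) (lt_rightVal h k)

theorem rightVal_lt_add_one (h : ∀ n, 0 < α n) (k : ℤ) : rightVal α k < α k + 1 := by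
  rw [rightVal_eq h, add_lt_add_iff_left, div_lt_one (rightVal_pos h _)]
  exact one_lt_rightVal h _

theorem lambdaVal_eq (h : ∀ n, 0 < α n) (k : ℤ) :
    lambdaVal α k = rightVal α k + 1 / leftVal α k := by
  unfold lambdaVal rightVal leftVal
  rw [cfVal_eq (a := fun n => if n = 0 then 0 else (α (k - n) : ℝ))
    fun i => by rw [if_neg i.succ_ne_zero]; exact_mod_cast h _]
  simp only [if_true, zero_add, Nat.add_eq_zero_iff, one_ne_zero, and_false, if_false]
  congr! 6
  push_cast
  ring

theorem lambdaVal_eq_digit_add (h : ∀ n, 0 < α n) (k : ℤ) :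
    lambdaVal α k = α k + 1 / rightVal α (k + 1) + 1 / leftVal α k := by
  rw [lambdaVal_eq h, rightVal_eq h]

theorem lambdaVal_revSeq (h : ∀ n, 0 < α n) (k : ℤ) :
    lambdaVal (revSeq α) (-k) = lambdaVal α k := by
  rw [lambdaVal_eq_digit_add h, lambdaVal_eq_digit_add (revSeq_pos h), leftVal_revSeq,
    leftVal_eq_rightVal_revSeq, revSeq, neg_neg, sub_neg_eq_add, add_comm (-k), add_comm k 1,
    ← sub_eq_add_neg, add_right_comm]

theorem lambdaVal_of_symm (h : ∀ n, 0 < α n) {c : ℤ} (hc : ∀ n, α (c - n) = α n) (k : ℤ) :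
    lambdaVal α (c - k) = lambdaVal α k := by
  rw [← lambdaVal_revSeq h k]
  refine lambdaVal_congr fun n => ?_
  rw [revSeq, ← hc (-(-k + n))]
  congr 1
  ring

end OneSided

/-! ### Comparison of continued fractions -/

section Comparison

variable {α β : ℤ → ℕ} {k l : ℤ}

theorem rightVal_lt_rightVal_of_digit_lt (hα : ∀ n, 0 < α n) (hβ : ∀ n, 0 < β n)
    (h : α k < β l) : rightVal α k < rightVal β l :=
  calc
    rightVal α k < α k + 1 := rightVal_lt_add_one hα k
    _ ≤ β l := by exact_mod_cast h
    _ < rightVal β l := lt_rightVal hβ l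

theorem rightVal_lt_rightVal_iff_of_digit_eq (hα : ∀ n, 0 < α n) (hβ : ∀ n, 0 < β n)
    (h : α k = β l) :
    rightVal α k < rightVal β l ↔ rightVal β (l + 1) < rightVal α (k + 1) := by
  rw [rightVal_eq hα, rightVal_eq hβ, h, add_lt_add_iff_left,
    one_div_lt_one_div (rightVal_pos hα _) (rightVal_pos hβ _)]

theorem exists_first_diff_of_rightVal_lt (hα : ∀ n, 0 < α n) (hβ : ∀ n, 0 < β n)
    (hlt : rightVal α k < rightVal β l) :
    ∃ j : ℕ, (∀ i < j, α (k + i) = β (l + i)) ∧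
      (Even j ∧ α (k + j) < β (l + j) ∨ Odd j ∧ β (l + j) < α (k + j)) := by
  have hex : ∃ j : ℕ, α (k + j) ≠ β (l + j) := by
    by_contra! heq
    exact hlt.ne (rightVal_congr heq)
  obtain ⟨j, hj, hmin⟩ : ∃ j : ℕ, α (k + j) ≠ β (l + j) ∧ ∀ i < j, α (k + i) = β (l + i) := by
    classical
    exact ⟨Nat.find hex, Nat.find_spec hex, fun i hi => not_not.1 (Nat.find_min hex hi)⟩
  refine ⟨j, hmin, ?_⟩
  clear hex
  induction j generalizing α β k l with
  | zero =>
    refine .inl ⟨.zero, hj.lt_of_le (not_lt.1 fun hgt => hlt.not_gt ?_)⟩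
    exact rightVal_lt_rightVal_of_digit_lt hβ hα (by simpa using hgt)
  | succ j ih =>
    have hshift (m : ℤ) (i : ℕ) : m + (i + 1 : ℕ) = m + 1 + i := by push_cast; ring
    simp only [hshift] at hj ⊢
    have hhead : α k = β l := by simpa using hmin 0 j.succ_pos
    have htail : ∀ i < j, β (l + 1 + i) = α (k + 1 + i) := fun i hi => by
      simpa only [hshift] using (hmin (i + 1) (by omega)).symm
    have hlt' := (rightVal_lt_rightVal_iff_of_digit_eq hα hβ hhead).1 hlt
    exact (ih hβ hα hlt' hj.symm htail).symm.imp
      (And.imp_left Odd.add_one) (And.imp_left Even.add_one)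

end Comparison

/-! ### Finite words -/

/-- The word `w` occurs in `α` from position `k` onwards. -/
def Occurs (α : ℤ → ℕ) : ℤ → List ℕ → Prop
  | _, [] => True
  | k, x :: w => α k = x ∧ Occurs α (k + 1) w

/-- The word `α_k α_{k+1} ⋯ α_{k+m-1}`. -/
def factor (α : ℤ → ℕ) (k : ℤ) (m : ℕ) : List ℕ := (List.range m).map fun i : ℕ => α (k + i)

section Words

variable {α β : ℤ → ℕ} {k l : ℤ} {u v w : List ℕ}

theorem occurs_append : Occurs α k (u ++ v) ↔ Occurs α k u ∧ Occurs α (k + u.length) v := by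
  induction u generalizing k with
  | nil => simp [Occurs]
  | cons x u ih =>
    simp only [List.cons_append, Occurs, ih, List.length_cons, Nat.cast_add, Nat.cast_one,
      and_assoc, add_assoc, add_comm (1 : ℤ)]

theorem Occurs.apply_add {i : ℕ} (h : Occurs α k w) (hi : i < w.length) : α (k + i) = w[i] := by
  induction w generalizing i k with
  | nil => exact absurd hi i.not_lt_zero
  | cons x w ih =>
    cases i with
    | zero => simpa using h.1
    | succ i =>
      rw [List.getElem_cons_succ, ← ih h.2 (Nat.lt_of_succ_lt_succ hi), Nat.cast_succ,
        add_comm (i : ℤ), add_assoc]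

theorem occurs_singleton {x : ℕ} : Occurs α k [x] ↔ α k = x := by
  simp only [Occurs, and_true]

theorem occurs_revSeq_iff :
    Occurs (revSeq α) k w ↔ Occurs α (1 - k - w.length) w.reverse := by
  induction w generalizing k with
  | nil => simp only [Occurs, List.reverse_nil]
  | cons x w ih =>
    rw [Occurs, ih, List.reverse_cons, occurs_append, occurs_singleton, revSeq, and_comm]
    simp only [List.length_cons, List.length_reverse, Nat.cast_add, Nat.cast_one]
    ring_nf

theorem Occurs.revSeq_of_reverse (h : Occurs α l w.reverse) (hkl : k + l + w.length = 1) :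
    Occurs (revSeq α) k w := by
  rwa [occurs_revSeq_iff, (by linarith : 1 - k - w.length = l)]

theorem Occurs.of_isPrefix (h : Occurs α k v) (huv : u <+: v) : Occurs α k u := by
  obtain ⟨_, rfl⟩ := huv
  exact (occurs_append.1 h).1

theorem Occurs.of_isSuffix_isPrefix {s t : List ℕ} (h : Occurs α (k - u.length) (u ++ v))
    (hs : s <:+ u) (ht : t <+: v) : Occurs α (k - s.length) (s ++ t) := by
  obtain ⟨p, rfl⟩ := hs
  obtain ⟨q, rfl⟩ := ht
  rw [List.append_assoc, ← List.append_assoc s] at h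
  convert (occurs_append.1 (occurs_append.1 h).2).1 using 1
  rw [List.length_append]
  push_cast
  ring

theorem Occurs.exists_of_isInfix (h : Occurs α k v) (huv : u <:+: v) : ∃ m, Occurs α m u := by
  obtain ⟨_, _, rfl⟩ := huv
  exact ⟨_, (occurs_append.1 (occurs_append.1 h).1).2⟩

theorem occurs_factor_iff {m : ℕ} :
    Occurs α k (factor β l m) ↔ ∀ i < m, α (k + i) = β (l + i) := by
  induction m with
  | zero => simp [factor, Occurs]
  | succ m ih =>
    rw [factor, List.range_succ, List.map_append, List.map_singleton, occurs_append,
      occurs_singleton, ← factor, ih, Nat.forall_lt_succ_right, factor, List.length_map,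
      List.length_range]

end Words

/-! ### Continued fractions beginning with a given word -/

/-- `[w₀; w₁, ..., wₙ, t]`, the continued fraction whose partial quotients are the letters of `w`
followed by the complete quotient `t`. -/
noncomputable def cfPrepend (w : List ℕ) (t : ℝ) : ℝ := w.foldr (fun (x : ℕ) s => x + 1 / s) t

section Prepend

variable {α : ℤ → ℕ} {k : ℤ} {w : List ℕ} {x y : ℝ}

theorem cfPrepend_cons (d : ℕ) (w : List ℕ) (t : ℝ) :
    cfPrepend (d :: w) t = d + 1 / cfPrepend w t := rfl

theorem cfPrepend_pos (w : List ℕ) (hx : 0 < x) : 0 < cfPrepend w x := by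
  induction w with
  | nil => exact hx
  | cons d w ih =>
    rw [cfPrepend_cons]
    positivity

theorem rightVal_eq_cfPrepend (h : ∀ n, 0 < α n) (hw : Occurs α k w) :
    rightVal α k = cfPrepend w (rightVal α (k + w.length)) := by
  induction w generalizing k with
  | nil => simp [cfPrepend]
  | cons d w ih =>
    rw [rightVal_eq h, hw.1, ih hw.2, cfPrepend_cons, List.length_cons]
    push_cast
    ring_nf

theorem cfPrepend_le_cfPrepend_iff (w : List ℕ) (hx : 0 < x) (hy : 0 < y) :
    cfPrepend w x ≤ cfPrepend w y ↔ if Even w.length then x ≤ y else y ≤ x := by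
  induction w generalizing x y with
  | nil => simp [cfPrepend]
  | cons d w ih =>
    rw [cfPrepend_cons, cfPrepend_cons, add_le_add_iff_left,
      one_div_le_one_div (cfPrepend_pos w hx) (cfPrepend_pos w hy), ih hy hx, List.length_cons,
      ← ite_not]
    simp only [Nat.even_add_one]

theorem abs_cfPrepend_sub_le (hw : ∀ d ∈ w, 0 < d) (hne : w ≠ []) (hx : 0 < x) (hy : 0 < y) :
    |cfPrepend w x - cfPrepend w y| ≤ |1 / x - 1 / y| := by
  have one_le {d : ℕ} (hd : 0 < d) {t : ℝ} (ht : 0 < t) : 1 ≤ (d : ℝ) + 1 / t :=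
    le_add_of_le_of_nonneg (by exact_mod_cast hd) (by positivity)
  induction w with
  | nil => exact absurd rfl hne
  | cons d w ih =>
    rw [cfPrepend_cons, cfPrepend_cons, add_sub_add_left_eq_sub]
    cases w with
    | nil => rfl
    | cons e w =>
      have he : 0 < e := hw e (by simp)
      exact (abs_one_div_sub_one_div_le (one_le he (cfPrepend_pos w hx))
        (one_le he (cfPrepend_pos w hy))).trans
        (ih (fun d hd => hw d (List.mem_cons_of_mem _ hd)) (List.cons_ne_nil e w))

theorem eq_of_cfPrepend_eq_self (hw : ∀ d ∈ w, 0 < d) (hne : w ≠ []) (hx : 1 < x) (hy : 1 < y)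
    (hwx : cfPrepend w x = x) (hwy : cfPrepend w y = y) : x = y := by
  have hx0 : 0 < x := zero_lt_one.trans hx
  have hy0 : 0 < y := zero_lt_one.trans hy
  have hle := abs_cfPrepend_sub_le hw hne hx0 hy0
  rw [hwx, hwy, div_sub_div 1 1 hx0.ne' hy0.ne', one_mul, mul_one, abs_div, abs_sub_comm y x,
    abs_of_pos (mul_pos hx0 hy0), le_div_iff₀ (mul_pos hx0 hy0)] at hle
  by_contra hxy
  have hpos : 0 < |x - y| := abs_pos.2 (sub_ne_zero.2 hxy)
  nlinarith [one_lt_mul_of_lt_of_le hx hy.le]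

end Prepend

/-! ### Rational bounds from finite words -/

/-- A lower and an upper bound for the continued fractions with partial quotients in `{1, ..., b}`
which begin with the given word. -/
def cfBounds (b : ℕ) : List ℕ → ℚ × ℚ
  | [] => (1, b + 1)
  | x :: w => (x + 1 / (cfBounds b w).2, x + 1 / (cfBounds b w).1)

/-- A lower bound for the value `λ` at the junction of `u` and `v`, in any sequence with digits in
`{1, ..., b}` containing `u ++ v`. -/
def lambdaLower (b : ℕ) (u v : List ℕ) : ℚ := (cfBounds b v).1 + 1 / (cfBounds b u.reverse).2

/-- An upper bound for the value `λ` at the junction of `u` and `v`, in any sequence with digits in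
`{1, ..., b}` containing `u ++ v`. -/
def lambdaUpper (b : ℕ) (u v : List ℕ) : ℚ := (cfBounds b v).2 + 1 / (cfBounds b u.reverse).1

section Bounds

variable {α : ℤ → ℕ} {b : ℕ} {k : ℤ} {u v : List ℕ}

theorem cfBounds_pos (b : ℕ) (w : List ℕ) : 0 < (cfBounds b w).1 ∧ 0 < (cfBounds b w).2 := by
  induction w with
  | nil => exact ⟨one_pos, by rw [cfBounds]; positivity⟩
  | cons x w ih =>
    obtain ⟨h₁, h₂⟩ := ih
    simp only [cfBounds]
    constructor <;> positivity

theorem rightVal_mem_cfBounds (h : ∀ n, α n ∈ Icc 1 b) (hv : Occurs α k v) :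
    rightVal α k ∈ Icc ((cfBounds b v).1 : ℝ) (cfBounds b v).2 := by
  have hpos (n : ℤ) : 0 < α n := (h n).1
  induction v generalizing k with
  | nil =>
    have hle : (α k : ℝ) ≤ b := by exact_mod_cast (h k).2
    simpa [cfBounds] using ⟨one_le_rightVal hpos k, by linarith [rightVal_lt_add_one hpos k]⟩
  | cons x v ih =>
    obtain ⟨hlo, hup⟩ := ih hv.2
    have hlo_pos : (0 : ℝ) < (cfBounds b v).1 := by exact_mod_cast (cfBounds_pos b v).1
    rw [rightVal_eq hpos, hv.1]
    simp only [cfBounds, Rat.cast_add, Rat.cast_div, Rat.cast_one, Rat.cast_natCast]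
    exact ⟨add_le_add_right (one_div_le_one_div_of_le (rightVal_pos hpos _) hup) _,
      add_le_add_right (one_div_le_one_div_of_le hlo_pos hlo) _⟩

theorem leftVal_mem_cfBounds (h : ∀ n, α n ∈ Icc 1 b) (hu : Occurs α k u) :
    leftVal α (k + u.length) ∈
      Icc ((cfBounds b u.reverse).1 : ℝ) (cfBounds b u.reverse).2 := by
  rw [leftVal_eq_rightVal_revSeq]
  refine rightVal_mem_cfBounds (fun n => h (-n)) (occurs_revSeq_iff.2 ?_)
  rw [List.reverse_reverse, List.length_reverse]
  convert hu using 1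
  ring

theorem lambdaVal_mem_Icc (h : ∀ n, α n ∈ Icc 1 b) (huv : Occurs α k (u ++ v)) :
    lambdaVal α (k + u.length) ∈ Icc (lambdaLower b u v : ℝ) (lambdaUpper b u v) := by
  have hpos (n : ℤ) : 0 < α n := (h n).1
  obtain ⟨hu, hv⟩ := occurs_append.1 huv
  obtain ⟨hlo, hup⟩ := rightVal_mem_cfBounds h hv
  obtain ⟨hlo', hup'⟩ := leftVal_mem_cfBounds h hu
  have hlo_pos : (0 : ℝ) < (cfBounds b u.reverse).1 := by exact_mod_cast (cfBounds_pos b _).1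
  rw [lambdaVal_eq hpos]
  simp only [lambdaLower, lambdaUpper, Rat.cast_add, Rat.cast_div, Rat.cast_one]
  exact ⟨add_le_add hlo (one_div_le_one_div_of_le (leftVal_pos hpos _) hup'),
    add_le_add hup (one_div_le_one_div_of_le hlo_pos hlo')⟩

end Bounds

/-! ### Search trees for forced words -/

/-- Certificate that some value `λ` at a position inside `w` is at least `q`, in any sequence with
digits in `{1, ..., b}` containing `w`. -/
def exceeds (b : ℕ) (q : ℚ) (w : List ℕ) : Bool :=
  (List.range w.length).any fun i => q ≤ lambdaLower b (w.take i) (w.drop i)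

/-- Certificate that around every junction of `u` and `v`, in any sequence with digits in
`{1, ..., b}`, one finds a junction of longer words satisfying `p`. The search tree of depth `n`
adds letters alternately to the left of `u` and to the right of `v`. -/
def forces (b : ℕ) (p : List ℕ → List ℕ → Bool) : ℕ → List ℕ → List ℕ → Bool
  | 0, u, v => p u v
  | n + 1, u, v => p u v || (List.range' 1 b).all fun x =>
      if Even n then forces b p n (x :: u) v else forces b p n u (v ++ [x])

section Search

variable {α : ℤ → ℕ} {b : ℕ} {k : ℤ}

theorem exists_le_lambdaVal_of_exceeds {q : ℚ} {w : List ℕ} (h : ∀ n, α n ∈ Icc 1 b)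
    (hw : Occurs α k w) (hq : exceeds b q w) : ∃ m, (q : ℝ) ≤ lambdaVal α m := by
  simp only [exceeds, List.any_eq_true, decide_eq_true_eq] at hq
  obtain ⟨i, -, hi⟩ := hq
  rw [← List.take_append_drop i w] at hw
  exact ⟨_, le_trans (by exact_mod_cast hi) (lambdaVal_mem_Icc h hw).1⟩

theorem exists_of_forces {p : List ℕ → List ℕ → Bool} {n : ℕ} {u v : List ℕ}
    (h : ∀ n, α n ∈ Icc 1 b) (huv : Occurs α (k - u.length) (u ++ v)) (hc : forces b p n u v) :
    ∃ u' v', Occurs α (k - u'.length) (u' ++ v') ∧ p u' v' := by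
  induction n generalizing u v with
  | zero => exact ⟨u, v, huv, hc⟩
  | succ n ih =>
    rw [forces, Bool.or_eq_true, List.all_eq_true] at hc
    rcases hc with hp | hall
    · exact ⟨u, v, huv, hp⟩
    have hbranch (m : ℤ) := hall (α m) <| by
      have hm := h m
      simp only [mem_Icc] at hm
      simp only [List.mem_range'_1]
      omega
    by_cases hn : Even n
    · simp only [hn, if_true] at hbranch
      refine ih ?_ (hbranch (k - u.length - 1))
      rw [List.cons_append, Occurs, List.length_cons, Nat.cast_add, Nat.cast_one, ← sub_sub,
        sub_add_cancel]
      exact ⟨rfl, huv⟩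
    · simp only [hn, if_false] at hbranch
      refine ih ?_ (hbranch (k + v.length))
      rw [← List.append_assoc, occurs_append, occurs_singleton, List.length_append]
      refine ⟨huv, congrArg α ?_⟩
      push_cast
      ring

end Search

/-! ### Periodic sequences -/

/-- The bi-infinite periodic sequence obtained by repeating the word `w`, placed at position `0`. -/
def periodicSeq (w : List ℕ) (n : ℤ) : ℕ := w.getD (n % w.length).toNat 0

section Periodic

variable {α : ℤ → ℕ} {d : ℕ} {w : List ℕ}

theorem forall_of_periodic {p : ℤ → Prop} (hd : 0 < d) (hp : Function.Periodic p d)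
    (h : ∀ r < d, p r) (n : ℤ) : p n := by
  have hn : p (n % d) := by
    lift n % d to ℕ using Int.emod_nonneg n (by omega) with r hr
    exact h r (by have hr := Int.emod_lt_of_pos n (by omega : (0 : ℤ) < d); omega)
  have hshift : p (n % d + n / d * d) = p (n % d) := hp.int_mul (n / d) (n % d)
  rw [Int.emod_add_ediv_mul] at hshift
  exact hshift.mpr hn

theorem mem_of_periodic {s : Set ℕ} (hd : 0 < d) (hα : Function.Periodic α d)
    (h : ∀ r < d, α r ∈ s) (n : ℤ) : α n ∈ s :=
  forall_of_periodic (p := fun n => α n ∈ s) hd (fun n => by simp only [hα n]) h n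

theorem sub_eq_of_periodic {c : ℤ} (hd : 0 < d) (hα : Function.Periodic α d)
    (h : ∀ r < d, α (c - r) = α r) (n : ℤ) : α (c - n) = α n :=
  forall_of_periodic (p := fun n => α (c - n) = α n) hd
    (fun n => by simp only [hα n, hα.const_sub c n]) h n

theorem periodic_rightVal (hα : Function.Periodic α d) : Function.Periodic (rightVal α) d :=
  fun k => rightVal_congr fun n => by rw [add_right_comm, hα]

theorem periodic_lambdaVal (hα : Function.Periodic α d) : Function.Periodic (lambdaVal α) d :=
  fun k => lambdaVal_congr fun n => by rw [add_right_comm, hα]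

theorem periodic_factor (hα : Function.Periodic α d) (m : ℕ) :
    Function.Periodic (fun k => factor α k m) d := fun k =>
  List.map_congr_left fun i _ => by rw [add_right_comm, hα]

theorem rightVal_eq_of_cfPrepend_eq_self (h : ∀ n, 0 < α n) (hα : Function.Periodic α w.length)
    {k : ℤ} (hw : Occurs α k w) (hne : w ≠ []) {y : ℝ} (hy : 1 < y) (hwy : cfPrepend w y = y) :
    rightVal α k = y := by
  have hpos : ∀ d ∈ w, 0 < d := fun d hd => by
    obtain ⟨i, hi, rfl⟩ := List.getElem_of_mem hd
    exact hw.apply_add hi ▸ h _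
  refine eq_of_cfPrepend_eq_self hpos hne (one_lt_rightVal h k) hy ?_ hwy
  rw [← periodic_rightVal hα, ← rightVal_eq_cfPrepend h hw, periodic_rightVal hα]

theorem periodic_periodicSeq (w : List ℕ) : Function.Periodic (periodicSeq w) w.length :=
  fun n => by rw [periodicSeq, Int.add_emod_right, periodicSeq]

theorem toNat_emod_lt (hw : w ≠ []) (n : ℤ) : (n % w.length).toNat < w.length := by
  have hlen : 0 < w.length := List.length_pos_iff.2 hw
  have hlt := Int.emod_lt_of_pos n (by omega : (0 : ℤ) < w.length)
  omega

theorem eq_periodicSeq_of_occurs (hw : w ≠ []) {k : ℤ}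
    (h : ∀ z : ℤ, Occurs α (k + w.length * z) w) (n : ℤ) : α (k + n) = periodicSeq w n := by
  rw [periodicSeq, List.getD_eq_getElem _ _ (toNat_emod_lt hw n),
    ← (h (n / w.length)).apply_add (toNat_emod_lt hw n),
    Int.toNat_of_nonneg (Int.emod_nonneg n (by simpa using hw)), add_assoc,
    Int.mul_ediv_add_emod]

end Periodic

/-! ### The two endpoints and the extremal periodic sequences -/

/-- The left endpoint of the gap interval. -/
noncomputable def gapLeft : ℝ := 10 * √718341 / 2819

/-- The right endpoint of the gap interval. -/
noncomputable def gapRight : ℝ := (14264157401 + 16294182 * √718341) / 9321104530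

/-- The periodic sequence with period `2 11111 22 11 222 11 2`, whose Markov value is `gapLeft`. -/
def lowerSeq : ℤ → ℕ := periodicSeq [2, 1, 1, 1, 1, 1, 2, 2, 1, 1, 2, 2, 2, 1, 1, 2]

/-- The periodic sequence with period `22 111`, whose Markov value is `√145 / 4`. -/
def middleSeq : ℤ → ℕ := periodicSeq [2, 2, 1, 1, 1]

theorem sqrt_718341_mem_Ioo : √718341 ∈ Ioo 847.5 847.55 :=
  ⟨Real.lt_sqrt_of_sq_lt (by norm_num), (Real.sqrt_lt' (by norm_num)).2 (by norm_num)⟩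

theorem sqrt_145_mem_Ioo : √145 ∈ Ioo 12.04 12.042 :=
  ⟨Real.lt_sqrt_of_sq_lt (by norm_num), (Real.sqrt_lt' (by norm_num)).2 (by norm_num)⟩

theorem lt_gapLeft : ((3.006 : ℚ) : ℝ) < gapLeft := by
  have hs : 847.5 < √718341 := sqrt_718341_mem_Ioo.1
  norm_num [gapLeft] at hs ⊢
  linarith

theorem periodic_lowerSeq : Function.Periodic lowerSeq (16 : ℕ) := periodic_periodicSeq _

theorem lowerSeq_mem_Icc (n : ℤ) : lowerSeq n ∈ Icc 1 2 :=
  mem_of_periodic (by norm_num) periodic_lowerSeq (by decide) n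

theorem lowerSeq_pos (n : ℤ) : 0 < lowerSeq n := (lowerSeq_mem_Icc n).1

theorem lowerSeq_six_sub (n : ℤ) : lowerSeq (6 - n) = lowerSeq n :=
  sub_eq_of_periodic (by norm_num) periodic_lowerSeq (by decide) n

theorem rightVal_lowerSeq_seven : rightVal lowerSeq 7 = (2518 + 4 * √718341) / 2285 := by
  have hs : √718341 ^ 2 = 718341 := Real.sq_sqrt (by norm_num)
  have hs0 : 847.5 < √718341 := sqrt_718341_mem_Ioo.1
  refine rightVal_eq_of_cfPrepend_eq_self lowerSeq_pos
    (w := [2, 1, 1, 2, 2, 2, 1, 1, 2, 2, 1, 1, 1, 1, 1, 2]) periodic_lowerSeq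
    (by simp [Occurs, lowerSeq, periodicSeq]) (List.cons_ne_nil _ _) (by linarith) ?_
  simp only [cfPrepend, List.foldr_cons, List.foldr_nil, Nat.cast_one, Nat.cast_ofNat]
  field_simp
  linear_combination (-182800) * hs

theorem rightVal_lowerSeq_zero_eq_cfPrepend :
    rightVal lowerSeq 0 = cfPrepend [2, 1, 1, 1, 1, 1, 2] (rightVal lowerSeq 7) :=
  rightVal_eq_cfPrepend lowerSeq_pos (by simp [Occurs, lowerSeq, periodicSeq])

theorem rightVal_lowerSeq_zero : rightVal lowerSeq 0 = (6295 + 10 * √718341) / 5638 := by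
  have hs : √718341 ^ 2 = 718341 := Real.sq_sqrt (by norm_num)
  rw [rightVal_lowerSeq_zero_eq_cfPrepend, rightVal_lowerSeq_seven]
  simp only [cfPrepend, List.foldr_cons, List.foldr_nil, Nat.cast_one, Nat.cast_ofNat]
  field_simp
  linear_combination (-840) * hs

theorem rightVal_lowerSeq_zero_add :
    rightVal lowerSeq 0 + 1 / rightVal lowerSeq 7 = gapLeft := by
  have hs : √718341 ^ 2 = 718341 := Real.sq_sqrt (by norm_num)
  rw [rightVal_lowerSeq_zero, rightVal_lowerSeq_seven, gapLeft]
  field_simp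
  linear_combination (-112760) * hs

theorem lambdaVal_lowerSeq_zero : lambdaVal lowerSeq 0 = gapLeft := by
  rw [lambdaVal_eq lowerSeq_pos, leftVal_eq_rightVal_of_symm lowerSeq_six_sub,
    ← rightVal_lowerSeq_zero_add]
  norm_num

theorem periodic_middleSeq : Function.Periodic middleSeq (5 : ℕ) := periodic_periodicSeq _

theorem middleSeq_mem_Icc (n : ℤ) : middleSeq n ∈ Icc 1 2 :=
  mem_of_periodic (by norm_num) periodic_middleSeq (by decide) n

theorem middleSeq_pos (n : ℤ) : 0 < middleSeq n := (middleSeq_mem_Icc n).1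

theorem middleSeq_one_sub (n : ℤ) : middleSeq (1 - n) = middleSeq n :=
  sub_eq_of_periodic (by norm_num) periodic_middleSeq (by decide) n

theorem rightVal_middleSeq_one : rightVal middleSeq 1 = (9 + √145) / 8 := by
  have hs : √145 ^ 2 = 145 := Real.sq_sqrt (by norm_num)
  have hs0 : 12.04 < √145 := sqrt_145_mem_Ioo.1
  refine rightVal_eq_of_cfPrepend_eq_self middleSeq_pos (w := [2, 1, 1, 1, 2]) periodic_middleSeq
    (by simp [Occurs, middleSeq, periodicSeq]) (List.cons_ne_nil _ _) (by linarith) ?_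
  simp only [cfPrepend, List.foldr_cons, List.foldr_nil, Nat.cast_one, Nat.cast_ofNat]
  field_simp
  linear_combination (-8) * hs

theorem lambdaVal_middleSeq_one : lambdaVal middleSeq 1 = √145 / 4 := by
  have hs : √145 ^ 2 = 145 := Real.sq_sqrt (by norm_num)
  rw [lambdaVal_eq middleSeq_pos, leftVal_eq_rightVal_of_symm middleSeq_one_sub]
  norm_num only [rightVal_middleSeq_one]
  field_simp
  linear_combination (-4) * hs

/-! ### Admissible sequences -/

/-- Sequences with digits in `{1, 2}` all of whose values `λ_k` lie below `gapRight`. -/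
structure Admissible (α : ℤ → ℕ) : Prop where
  digit_mem : ∀ n, α n ∈ Icc 1 2
  lambdaVal_lt : ∀ k, lambdaVal α k < gapRight

/-- A rational number slightly above `gapRight`: every value `λ` certified to reach it is excluded
in an admissible sequence. -/
def gapRightApprox : ℚ := 3.01190608

theorem gapRight_lt_gapRightApprox : gapRight < gapRightApprox := by
  have hs : √718341 < 847.55 := sqrt_718341_mem_Ioo.2
  norm_num [gapRight, gapRightApprox] at hs ⊢
  linarith

namespace Admissible

variable {α : ℤ → ℕ} {k : ℤ}

theorem pos (h : Admissible α) (n : ℤ) : 0 < α n := (h.digit_mem n).1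

theorem revSeq (h : Admissible α) : Admissible (revSeq α) where
  digit_mem n := h.digit_mem (-n)
  lambdaVal_lt k := by
    rw [← neg_neg k, lambdaVal_revSeq h.pos]
    exact h.lambdaVal_lt _

theorem not_exceeds (h : Admissible α) {w : List ℕ} (hw : Occurs α k w) :
    exceeds 2 gapRightApprox w = false := by
  by_contra hc
  rw [Bool.not_eq_false] at hc
  obtain ⟨m, hm⟩ := exists_le_lambdaVal_of_exceeds h.digit_mem hw hc
  exact (hm.trans_lt (h.lambdaVal_lt m)).not_gt gapRight_lt_gapRightApprox

theorem exists_of_forces (h : Admissible α) {p : List ℕ → List ℕ → Bool} {n : ℕ} {u v : List ℕ}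
    (huv : Occurs α (k - u.length) (u ++ v))
    (hc : forces 2 (fun u v => exceeds 2 gapRightApprox (u ++ v) || p u v) n u v) :
    ∃ u' v', Occurs α (k - u'.length) (u' ++ v') ∧ p u' v' := by
  obtain ⟨u', v', hw, hp⟩ := _root_.exists_of_forces h.digit_mem huv hc
  rw [h.not_exceeds hw, Bool.false_or] at hp
  exact ⟨u', v', hw, hp⟩

end Admissible

section UpperBound

variable {α : ℤ → ℕ} {k : ℤ}

-- A sequence whose first difference with `lowerSeq` makes its continued fraction larger has, at
-- that difference, a `2` instead of a `1` in an even place or a `1` instead of a `2` in an odd one.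
theorem exceeds_lowerSeq_deviation (j : ℤ)
    (hj : Even j ∧ lowerSeq j = 1 ∨ Odd j ∧ lowerSeq j = 2) :
    exceeds 2 gapRightApprox (factor lowerSeq (j - 8) 8 ++ [3 - lowerSeq j]) := by
  refine forall_of_periodic (d := 16)
    (p := fun j : ℤ => Even j ∧ lowerSeq j = 1 ∨ Odd j ∧ lowerSeq j = 2 →
      exceeds 2 gapRightApprox (factor lowerSeq (j - 8) 8 ++ [3 - lowerSeq j]))
    (by norm_num) (fun j => ?_) (by decide +kernel) j hj
  have hfactor := periodic_factor periodic_lowerSeq 8 (j - 8)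
  have heven : Even (j + (16 : ℕ)) ↔ Even j := by
    simp only [Int.even_add, (by decide : Even ((16 : ℕ) : ℤ)), iff_true]
  simp only [add_sub_right_comm, hfactor, periodic_lowerSeq j, ← Int.not_even_iff_odd, heven]

theorem Admissible.rightVal_le_rightVal_lowerSeq (h : Admissible α)
    (hw : Occurs α k [2, 1, 1, 1, 1, 1, 2, 2]) : rightVal α k ≤ rightVal lowerSeq 0 := by
  by_contra! hlt
  obtain ⟨j, heq, hdiff⟩ := exists_first_diff_of_rightVal_lt lowerSeq_pos h.pos hlt
  simp only [zero_add] at heq hdiff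
  have hj : 8 ≤ j := by
    by_contra! hj
    have hlow : Occurs lowerSeq 0 [2, 1, 1, 1, 1, 1, 2, 2] := by
      simp [Occurs, lowerSeq, periodicSeq]
    have hsame := (hlow.apply_add hj).trans (hw.apply_add hj).symm
    rw [zero_add] at hsame
    omega
  have hαj := h.digit_mem (k + j)
  have hlowj := lowerSeq_mem_Icc j
  rw [mem_Icc] at hαj hlowj
  have hdev : Occurs α (k + j - 8) (factor lowerSeq (j - 8) 8 ++ [3 - lowerSeq j]) := by
    refine occurs_append.2 ⟨occurs_factor_iff.2 fun i hi => ?_, occurs_singleton.2 ?_⟩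
    · have hagree := heq (j - 8 + i) (by omega)
      push_cast [hj] at hagree
      rw [hagree]
      congr 1
      ring
    · rw [factor, List.length_map, List.length_range, Nat.cast_ofNat, sub_add_cancel]
      omega
  have hexc := exceeds_lowerSeq_deviation j <| by
    rw [Int.even_coe_nat, Int.odd_coe_nat]
    exact hdiff.imp (And.imp_right fun _ => by omega) (And.imp_right fun _ => by omega)
  exact Bool.false_ne_true ((h.not_exceeds hdev).symm.trans hexc)

theorem Admissible.rightVal_lowerSeq_seven_le (h : Admissible α)
    (hw : Occurs α k [2, 1, 1, 1, 1, 1, 2, 2]) : rightVal lowerSeq 7 ≤ rightVal α (k + 7) := by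
  have hle := h.rightVal_le_rightVal_lowerSeq hw
  rw [rightVal_lowerSeq_zero_eq_cfPrepend,
    rightVal_eq_cfPrepend h.pos (w := [2, 1, 1, 1, 1, 1, 2]) (hw.of_isPrefix ⟨[2], rfl⟩),
    cfPrepend_le_cfPrepend_iff _ (rightVal_pos h.pos _) (rightVal_pos lowerSeq_pos _)] at hle
  exact hle

theorem Admissible.lambdaVal_le_gapLeft (h : Admissible α)
    (hw : Occurs α (k - 1) [2, 2, 1, 1, 1, 1, 1, 2, 2]) : lambdaVal α k ≤ gapLeft := by
  have hright : Occurs α k [2, 1, 1, 1, 1, 1, 2, 2] := by simpa using hw.2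
  have hleft : Occurs (_root_.revSeq α) (1 - k - 7) [2, 1, 1, 1, 1, 1, 2, 2] :=
    (hw.of_isPrefix (u := [2, 2, 1, 1, 1, 1, 1, 2]) ⟨[2], rfl⟩).revSeq_of_reverse
      (by simp only [List.length_cons, List.length_nil]; omega)
  have hle := h.revSeq.rightVal_lowerSeq_seven_le hleft
  rw [sub_add_cancel, ← leftVal_eq_rightVal_revSeq] at hle
  rw [lambdaVal_eq h.pos, ← rightVal_lowerSeq_zero_add]
  exact add_le_add (h.rightVal_le_rightVal_lowerSeq hright)
    (one_div_le_one_div_of_le (rightVal_pos lowerSeq_pos 7) hle)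

theorem Admissible.lambdaVal_le_gapLeft_of_mirror (h : Admissible α)
    (hw : Occurs α (k - 7) [2, 2, 1, 1, 1, 1, 1, 2, 2]) : lambdaVal α k ≤ gapLeft := by
  rw [← lambdaVal_revSeq h.pos]
  exact h.revSeq.lambdaVal_le_gapLeft <|
    hw.revSeq_of_reverse (by simp only [List.length_cons, List.length_nil]; omega)

end UpperBound

/-! ### Chains of blocks `22 111` -/

/-- Three consecutive blocks `22` separated by `111`. -/
def tripleWord : List ℕ := [2, 2, 1, 1, 1, 2, 2, 1, 1, 1, 2, 2]

/-- The word `tripleWord` without its first and last letters. -/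
def tripleCore : List ℕ := [2, 1, 1, 1, 2, 2, 1, 1, 1, 2]

section TripleWord

variable {α : ℤ → ℕ} {k : ℤ}

theorem Occurs.revSeq_tripleWord (hk : Occurs α k tripleWord) :
    Occurs (revSeq α) (-k - 11) tripleWord :=
  hk.revSeq_of_reverse (by simp only [tripleWord, List.length_cons, List.length_nil]; omega)

theorem Admissible.exists_tripleWord (h : Admissible α) (hk : gapLeft < lambdaVal α k) :
    ∃ m, Occurs α m tripleWord := by
  obtain ⟨u, v, huv, hp⟩ := h.exists_of_forces (k := k) (n := 22) (u := []) (v := [])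
    (p := fun u v => lambdaUpper 2 u v ≤ 3.006 ∨
      [2] <:+ u ∧ [2, 1, 1, 1, 1, 1, 2, 2] <+: v ∨
      [2, 2, 1, 1, 1, 1, 1] <:+ u ∧ [2, 2] <+: v ∨ tripleWord <:+: u ++ v)
    trivial (by decide +kernel)
  rcases of_decide_eq_true hp with hle | ⟨hu, hv⟩ | ⟨hu, hv⟩ | htriple
  · have hup := (lambdaVal_mem_Icc h.digit_mem huv).2
    rw [sub_add_cancel] at hup
    exact absurd (hup.trans (by exact_mod_cast hle)) (lt_gapLeft.trans hk).not_ge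
  · exact absurd (h.lambdaVal_le_gapLeft (huv.of_isSuffix_isPrefix hu hv)) hk.not_ge
  · exact absurd (h.lambdaVal_le_gapLeft_of_mirror (huv.of_isSuffix_isPrefix hu hv)) hk.not_ge
  · exact huv.exists_of_isInfix htriple

theorem Admissible.tripleWord_append (h : Admissible α) (hk : Occurs α k tripleWord) :
    Occurs α k (tripleWord ++ [1, 1, 1, 2, 2]) ∨
      Occurs α k (tripleWord ++ [1, 1, 1, 1, 1, 2, 2]) := by
  obtain ⟨u, v, huv, hp⟩ := h.exists_of_forces (k := k) (n := 14) (u := []) (v := tripleWord)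
    (p := fun _ v => tripleWord ++ [1, 1, 1, 2, 2] <+: v ∨
      tripleWord ++ [1, 1, 1, 1, 1, 2, 2] <+: v)
    (by simpa using hk) (by decide +kernel)
  have hv : Occurs α k v := by simpa using huv.of_isSuffix_isPrefix u.nil_suffix v.prefix_rfl
  exact (of_decide_eq_true hp).imp hv.of_isPrefix hv.of_isPrefix

theorem Admissible.append_tripleWord (h : Admissible α) (hk : Occurs α k tripleWord) :
    Occurs α (k - 5) ([2, 2, 1, 1, 1] ++ tripleWord) ∨
      Occurs α (k - 7) ([2, 2, 1, 1, 1, 1, 1] ++ tripleWord) := by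
  rw [← revSeq_revSeq α]
  refine (h.revSeq.tripleWord_append hk.revSeq_tripleWord).imp
    (Occurs.revSeq_of_reverse · ?_) (Occurs.revSeq_of_reverse · ?_) <;>
  · simp only [tripleWord, List.cons_append, List.nil_append, List.length_cons, List.length_nil]
    omega

theorem lambdaVal_add_one_of_tripleWord (h : ∀ n, 0 < α n) (hk : Occurs α k tripleWord) :
    lambdaVal α (k + 1) =
      cfPrepend tripleCore (rightVal α (k + 11)) + 1 / leftVal α (k + 1) := by
  have hcore : Occurs α (k + 1) tripleCore := hk.2.of_isPrefix ⟨[2], rfl⟩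
  rw [lambdaVal_eq h, rightVal_eq_cfPrepend h hcore, tripleCore]
  simp only [List.length_cons, List.length_nil, add_assoc]
  norm_num

theorem lambdaVal_add_ten_of_tripleWord (h : ∀ n, 0 < α n) (hk : Occurs α k tripleWord) :
    lambdaVal α (k + 10) =
      cfPrepend tripleCore (leftVal α (k + 1)) + 1 / rightVal α (k + 11) := by
  have hone := lambdaVal_add_one_of_tripleWord (revSeq_pos h) hk.revSeq_tripleWord
  rw [leftVal_revSeq, (by ring : -k - 11 + 1 = -(k + 10)), lambdaVal_revSeq h] at hone
  rw [hone, leftVal_eq_rightVal_revSeq]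
  ring_nf

theorem cfPrepend_tripleCore_add :
    cfPrepend tripleCore (rightVal lowerSeq 0) + 1 / rightVal lowerSeq 0 = gapRight := by
  have hs : √718341 ^ 2 = 718341 := Real.sq_sqrt (by norm_num)
  rw [rightVal_lowerSeq_zero, gapRight]
  simp only [tripleCore, cfPrepend, List.foldr_cons, List.foldr_nil, Nat.cast_one, Nat.cast_ofNat]
  field_simp
  linear_combination (-264094662608480 - 312848294400 * √718341) * hs

-- The contraction property of `cfPrepend` makes the variation of `1 / y` dominate.
theorem gapRight_le_of_le {x y : ℝ} (hy : 0 < y) (hyx : y ≤ x) (hx : x ≤ rightVal lowerSeq 0) :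
    gapRight ≤ cfPrepend tripleCore x + 1 / y := by
  have hx0 : 0 < x := hy.trans_le hyx
  have hlow : 0 < rightVal lowerSeq 0 := hx0.trans_le hx
  have hcontr := abs_cfPrepend_sub_le (w := tripleCore) (by decide) (List.cons_ne_nil _ _) hlow hx0
  rw [abs_sub_comm (1 / _), abs_of_nonneg (sub_nonneg.2 (one_div_le_one_div_of_le hx0 hx))]
    at hcontr
  have hinv : 1 / x ≤ 1 / y := one_div_le_one_div_of_le hy hyx
  rw [← cfPrepend_tripleCore_add]
  linarith [le_of_abs_le hcontr]

theorem Admissible.not_occurs_of_both_ends (h : Admissible α)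
    (hright : Occurs α k (tripleWord ++ [1, 1, 1, 1, 1, 2, 2])) :
    ¬ Occurs α (k - 7) ([2, 2, 1, 1, 1, 1, 1] ++ tripleWord) := by
  intro hleft
  have htriple : Occurs α k tripleWord := (occurs_append.1 hright).1
  have hx : rightVal α (k + 11) ≤ rightVal lowerSeq 0 :=
    h.rightVal_le_rightVal_lowerSeq (occurs_append (u := tripleWord.take 11).1 hright).2
  have hy : leftVal α (k + 1) ≤ rightVal lowerSeq 0 := by
    rw [leftVal_eq_rightVal_revSeq]
    refine h.revSeq.rightVal_le_rightVal_lowerSeq ?_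
    have hword : Occurs α (k - 7) [2, 2, 1, 1, 1, 1, 1, 2] :=
      hleft.of_isPrefix ⟨tripleWord.tail, rfl⟩
    exact hword.revSeq_of_reverse (by simp only [List.length_cons, List.length_nil]; omega)
  have hone := h.lambdaVal_lt (k + 1)
  have hten := h.lambdaVal_lt (k + 10)
  rw [lambdaVal_add_one_of_tripleWord h.pos htriple] at hone
  rw [lambdaVal_add_ten_of_tripleWord h.pos htriple] at hten
  rcases le_total (leftVal α (k + 1)) (rightVal α (k + 11)) with hle | hle
  · exact hone.not_ge (gapRight_le_of_le (leftVal_pos h.pos _) hle hx)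
  · exact hten.not_ge (gapRight_le_of_le (rightVal_pos h.pos _) hle hy)

theorem Admissible.not_occurs_tripleWord_append (h : Admissible α) :
    ¬ Occurs α k (tripleWord ++ [1, 1, 1, 1, 1, 2, 2]) := by
  intro hk
  have hleft := (h.append_tripleWord (occurs_append.1 hk).1).resolve_right
    (h.not_occurs_of_both_ends hk)
  have hword : Occurs α (k - 5) ([2, 2, 1, 1, 1] ++ (tripleWord ++ [1, 1, 1, 1, 1, 2, 2])) :=
    occurs_append.2 ⟨(occurs_append.1 hleft).1, by simpa using hk⟩
  obtain ⟨_, _, -, hfalse⟩ := h.exists_of_forces (k := k - 5) (n := 8) (u := [])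
    (p := fun _ _ => false) (by simpa using hword) (by decide +kernel)
  exact Bool.false_ne_true hfalse

theorem Admissible.tripleWord_add_five (h : Admissible α) (hk : Occurs α k tripleWord) :
    Occurs α (k + 5) tripleWord :=
  (occurs_append (u := [2, 2, 1, 1, 1]).1
    ((h.tripleWord_append hk).resolve_right h.not_occurs_tripleWord_append)).2

theorem Admissible.tripleWord_sub_five (h : Admissible α) (hk : Occurs α k tripleWord) :
    Occurs α (k - 5) tripleWord := by
  have hmirror := (h.revSeq.tripleWord_add_five hk.revSeq_tripleWord).revSeq_tripleWord
  rwa [revSeq_revSeq, (by ring : -(-k - 11 + 5) - 11 = k - 5)] at hmirror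

theorem Admissible.eq_middleSeq (h : Admissible α) (hk : Occurs α k tripleWord) (n : ℤ) :
    α (k + n) = middleSeq n := by
  refine eq_periodicSeq_of_occurs (List.cons_ne_nil _ _) (fun z => ?_) n
  suffices hz : Occurs α (k + 5 * z) tripleWord from hz.of_isPrefix ⟨_, rfl⟩
  induction z using Int.induction_on with
  | zero => simpa using hk
  | succ i ih => simpa [mul_add, add_assoc] using h.tripleWord_add_five ih
  | pred i ih => simpa [mul_sub, add_sub_assoc] using h.tripleWord_sub_five ih

end TripleWord

/-! ### Values of the extremal sequences -/

/-- An upper bound for `λ_l(β)`, and for the value `λ` of any sequence with digits in `{1, ..., b}`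
agreeing with `β` around `l`, computed from the `m` letters of `β` on each side of the junction at
`l`. -/
def windowUpper (b : ℕ) (β : ℤ → ℕ) (m : ℕ) (l : ℤ) : ℚ :=
  lambdaUpper b (factor β (l - m) m) (factor β l m)

section Spectrum

variable {α β : ℤ → ℕ} {b m : ℕ} {k l : ℤ}

theorem lambdaVal_le_windowUpper (h : ∀ n, α n ∈ Icc 1 b)
    (hαβ : ∀ i : ℤ, -m ≤ i → i < m → α (k + i) = β (l + i)) :
    lambdaVal α k ≤ windowUpper b β m l := by
  have hlen : (factor β (l - m) m).length = m := by
    rw [factor, List.length_map, List.length_range]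
  have hleft : Occurs α (k - m) (factor β (l - m) m) := occurs_factor_iff.2 fun i hi => by
    have hi' := hαβ (i - m) (by omega) (by omega)
    rwa [add_sub_left_comm, add_comm (i : ℤ), add_sub_left_comm, add_comm (i : ℤ)] at hi'
  have hright : Occurs α k (factor β l m) :=
    occurs_factor_iff.2 fun i hi => hαβ i (by omega) (by omega)
  have hle := (lambdaVal_mem_Icc h (occurs_append.2 ⟨hleft, by rwa [hlen, sub_add_cancel]⟩)).2
  rwa [hlen, sub_add_cancel] at hle

theorem markovValue_eq_of_isGreatest {x : ℝ} (hx : IsGreatest (range (lambdaVal α)) x) :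
    markovValue α = x := hx.csSup_eq

theorem mem_markovSpectrum_of_isGreatest (h : ∀ n, 0 < α n) {x : ℝ}
    (hx : IsGreatest (range (lambdaVal α)) x) : x ∈ markovSpectrum :=
  ⟨α, h, hx.bddAbove, markovValue_eq_of_isGreatest hx⟩

theorem markovValue_congr (h : ∀ n, α (k + n) = β n) : markovValue α = markovValue β := by
  refine ((Equiv.addLeft k).iSup_congr fun n => (lambdaVal_congr fun i => ?_).symm).symm
  rw [Equiv.coe_addLeft, add_assoc, h]

theorem digit_le_of_lambdaVal_lt (h : ∀ n, 0 < α n)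
    (hlt : ∀ n, lambdaVal α n < b + 1 + 2 / (b + 2)) (n : ℤ) : α n ≤ b := by
  have hfrac : (2 : ℝ) / (b + 2) ≤ 1 := (div_le_one (by positivity)).2 (by simp)
  have hdigit (j : ℤ) : α j ≤ b + 1 := by
    have hj : (α j : ℝ) < lambdaVal α j := by
      rw [lambdaVal_eq h]
      exact (lt_rightVal h j).trans (lt_add_of_pos_right _ (one_div_pos.2 (leftVal_pos h j)))
    have hlt' : (α j : ℝ) < (b + 1 : ℕ) + 1 := by push_cast; linarith [hlt j]
    exact Nat.lt_succ_iff.1 (by exact_mod_cast hlt')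
  have hlow := (lambdaVal_mem_Icc (fun j => ⟨h j, hdigit j⟩) (u := []) (v := [α n])
    (occurs_singleton.2 (rfl : α n = α n))).1
  by_contra! hn
  have hn' : (b + 1 : ℝ) ≤ α n := by exact_mod_cast hn
  have hsum : (b + 1 + 2 / (b + 2) : ℝ) ≤ lambdaVal α n := by
    refine le_trans ?_ (hlow.trans_eq (by simp))
    simp only [lambdaLower, cfBounds, List.reverse_nil]
    push_cast
    rw [add_assoc (b : ℝ) 1 1, one_add_one_eq_two, add_assoc (α n : ℝ), ← add_div,
      one_add_one_eq_two]
    exact add_le_add_left hn' _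
  exact (hlt n).not_ge hsum

end Spectrum

theorem isGreatest_lambdaVal_lowerSeq : IsGreatest (range (lambdaVal lowerSeq)) gapLeft := by
  refine ⟨⟨0, lambdaVal_lowerSeq_zero⟩, forall_mem_range.2 ?_⟩
  refine forall_of_periodic (d := 16) (by norm_num)
    (fun n => by rw [periodic_lambdaVal periodic_lowerSeq]) fun r hr => ?_
  have hcases : ∀ r : ℕ, r < 16 → r = 0 ∨ r = 6 ∨ windowUpper 2 lowerSeq 7 r ≤ 3.006 := by
    decide +kernel
  rcases hcases r hr with rfl | rfl | hle
  · exact lambdaVal_lowerSeq_zero.le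
  · rw [← lambdaVal_lowerSeq_zero, ← lambdaVal_of_symm lowerSeq_pos lowerSeq_six_sub 0]
    rfl
  · have happrox : ((3.006 : ℚ) : ℝ) ≤ gapLeft := lt_gapLeft.le
    exact (lambdaVal_le_windowUpper lowerSeq_mem_Icc fun _ _ _ => rfl).trans
      (le_trans (by exact_mod_cast hle) happrox)

theorem isGreatest_lambdaVal_middleSeq : IsGreatest (range (lambdaVal middleSeq)) (√145 / 4) := by
  refine ⟨⟨1, lambdaVal_middleSeq_one⟩, forall_mem_range.2 ?_⟩
  refine forall_of_periodic (d := 5) (by norm_num)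
    (fun n => by rw [periodic_lambdaVal periodic_middleSeq]) fun r hr => ?_
  have hcases : ∀ r : ℕ, r < 5 → r = 0 ∨ r = 1 ∨ windowUpper 2 middleSeq 7 r ≤ 3.01 := by
    decide +kernel
  rcases hcases r hr with rfl | rfl | hle
  · rw [← lambdaVal_middleSeq_one, ← lambdaVal_of_symm middleSeq_pos middleSeq_one_sub 1]
    rfl
  · exact lambdaVal_middleSeq_one.le
  · have happrox : ((3.01 : ℚ) : ℝ) ≤ √145 / 4 := by
      have hs : 12.04 < √145 := sqrt_145_mem_Ioo.1
      norm_num at hs ⊢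
      linarith
    exact (lambdaVal_le_windowUpper middleSeq_mem_Icc fun _ _ _ => rfl).trans
      (le_trans (by exact_mod_cast hle) happrox)

theorem windowUpper_lowerSeq_le (l : ℤ) : windowUpper 2 lowerSeq 7 l ≤ 3.011 := by
  refine forall_of_periodic (d := 16) (p := fun l => windowUpper 2 lowerSeq 7 l ≤ 3.011)
    (by norm_num) (fun l => ?_) (by decide +kernel) l
  have hfactor := periodic_factor periodic_lowerSeq 7
  simp only [windowUpper, add_sub_right_comm, hfactor _]

/-- The word `tripleWord`, placed at position `0`, continued on both sides by the half of `lowerSeq`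
starting at position `0`; its Markov value is `gapRight`. -/
def upperSeq (n : ℤ) : ℕ :=
  if n < 0 then lowerSeq (-n) else if n < 11 then tripleWord.getD n.toNat 0 else lowerSeq (n - 11)

theorem upperSeq_of_eleven_le {n : ℤ} (hn : 11 ≤ n) : upperSeq n = lowerSeq (n - 11) := by
  rw [upperSeq, if_neg (by omega), if_neg (by omega)]

theorem upperSeq_eleven_sub (n : ℤ) : upperSeq (11 - n) = upperSeq n := by
  rcases lt_or_ge n 0 with hn | hn
  · rw [upperSeq_of_eleven_le (by omega), upperSeq, if_pos hn]
    ring_nf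
  rcases lt_or_ge 11 n with hn' | hn'
  · rw [upperSeq_of_eleven_le hn'.le, upperSeq, if_pos (by omega)]
    ring_nf
  · interval_cases n <;> rfl

theorem upperSeq_mem_Icc (n : ℤ) : upperSeq n ∈ Icc 1 2 := by
  rcases lt_or_ge n 0 with hn | hn
  · rw [upperSeq, if_pos hn]
    exact lowerSeq_mem_Icc _
  rcases lt_or_ge n 11 with hn' | hn'
  · interval_cases n <;> decide
  · rw [upperSeq_of_eleven_le hn']
    exact lowerSeq_mem_Icc _

theorem upperSeq_pos (n : ℤ) : 0 < upperSeq n := (upperSeq_mem_Icc n).1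

theorem lambdaVal_upperSeq_one : lambdaVal upperSeq 1 = gapRight := by
  have htriple : Occurs upperSeq 0 tripleWord := by
    simp [Occurs, tripleWord, upperSeq, lowerSeq, periodicSeq]
  have hright : rightVal upperSeq 11 = rightVal lowerSeq 0 := rightVal_congr fun n => by
    rw [upperSeq_of_eleven_le (by omega), add_sub_cancel_left, zero_add]
  have hone := lambdaVal_add_one_of_tripleWord upperSeq_pos htriple
  rw [leftVal_eq_rightVal_of_symm upperSeq_eleven_sub] at hone
  norm_num only [hright] at hone
  rw [hone, cfPrepend_tripleCore_add]

theorem lambdaVal_upperSeq_le_of_six_le {n : ℤ} (hn : 6 ≤ n) : lambdaVal upperSeq n ≤ gapRight := by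
  have happrox : ((3.011 : ℚ) : ℝ) ≤ gapRight := by
    have hs : 847.5 < √718341 := sqrt_718341_mem_Ioo.1
    norm_num [gapRight] at hs ⊢
    linarith
  suffices hcases : n = 10 ∨ lambdaVal upperSeq n ≤ (3.011 : ℚ) by
    rcases hcases with rfl | hle
    · rw [← lambdaVal_upperSeq_one, ← lambdaVal_of_symm upperSeq_pos upperSeq_eleven_sub 1]
      rfl
    · exact hle.trans happrox
  rcases lt_or_ge n 18 with hn' | hn'
  · have hcases : ∀ r : ℕ, r < 18 → 6 ≤ r → r = 10 ∨ windowUpper 2 upperSeq 7 r ≤ 3.011 := by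
      decide +kernel
    lift n to ℕ using by omega
    refine (hcases n (by omega) (by omega)).imp (congrArg _) fun hle => ?_
    exact (lambdaVal_le_windowUpper upperSeq_mem_Icc fun _ _ _ => rfl).trans
      (by exact_mod_cast hle)
  · have hwindow := windowUpper_lowerSeq_le (n - 11)
    refine .inr ((lambdaVal_le_windowUpper upperSeq_mem_Icc fun i hi _ => ?_).trans
      (by exact_mod_cast hwindow))
    rw [upperSeq_of_eleven_le (by omega), add_sub_right_comm]

theorem isGreatest_lambdaVal_upperSeq : IsGreatest (range (lambdaVal upperSeq)) gapRight := by
  refine ⟨⟨1, lambdaVal_upperSeq_one⟩, forall_mem_range.2 fun n => ?_⟩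
  rcases lt_or_ge n 6 with hn | hn
  · rw [← lambdaVal_of_symm upperSeq_pos upperSeq_eleven_sub]
    exact lambdaVal_upperSeq_le_of_six_le (by omega)
  · exact lambdaVal_upperSeq_le_of_six_le hn

theorem admissible_of_lt_gapRight {α : ℤ → ℕ} (h : ∀ n, 0 < α n)
    (hlt : ∀ k, lambdaVal α k < gapRight) : Admissible α where
  digit_mem n := by
    refine ⟨h n, digit_le_of_lambdaVal_lt (b := 2) h (fun k => (hlt k).trans ?_) n⟩
    refine gapRight_lt_gapRightApprox.trans ?_
    norm_num [gapRightApprox]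
  lambdaVal_lt := hlt

theorem eq_of_mem_markovSpectrum_of_mem_Ioo {x : ℝ} (hx : x ∈ markovSpectrum)
    (hgap : x ∈ Ioo gapLeft gapRight) : x = √145 / 4 := by
  obtain ⟨α, h, hbdd, rfl⟩ := hx
  have hα : Admissible α :=
    admissible_of_lt_gapRight h fun k => (le_ciSup hbdd k).trans_lt hgap.2
  obtain ⟨k, hk⟩ := exists_lt_of_lt_ciSup hgap.1
  obtain ⟨m, hm⟩ := hα.exists_tripleWord hk
  rw [markovValue_congr (hα.eq_middleSeq hm),
    markovValue_eq_of_isGreatest isGreatest_lambdaVal_middleSeq]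

theorem sqrt_145_div_four_mem_Ioo : √145 / 4 ∈ Ioo gapLeft gapRight := by
  have hs : √718341 ∈ Ioo 847.5 847.55 := sqrt_718341_mem_Ioo
  have ht : √145 ∈ Ioo 12.04 12.042 := sqrt_145_mem_Ioo
  norm_num [gapLeft, gapRight] at hs ht ⊢
  constructor <;> linarith

/-- The intersection of the Markov spectrum with the open interval consists of
exactly one (hence isolated) point, and both endpoints belong to the Markov
spectrum. -/
theorem markov_gap_14 :
    markovSpectrum ∩ Ioo (10 * Real.sqrt 718341 / 2819) ((14264157401 + 16294182 * Real.sqrt 718341) / 9321104530) = {(Real.sqrt 145 / 4 : ℝ)} ∧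
    (10 * Real.sqrt 718341 / 2819) ∈ markovSpectrum ∧ ((14264157401 + 16294182 * Real.sqrt 718341) / 9321104530) ∈ markovSpectrum := by
  refine ⟨eq_singleton_iff_unique_mem.2 ⟨⟨?_, sqrt_145_div_four_mem_Ioo⟩, fun x hx => ?_⟩, ?_, ?_⟩
  · exact mem_markovSpectrum_of_isGreatest middleSeq_pos isGreatest_lambdaVal_middleSeq
  · exact eq_of_mem_markovSpectrum_of_mem_Ioo hx.1 hx.2
  · exact mem_markovSpectrum_of_isGreatest lowerSeq_pos isGreatest_lambdaVal_lowerSeq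
  · exact mem_markovSpectrum_of_isGreatest upperSeq_pos isGreatest_lambdaVal_upperSeq
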